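/- Let G be a constructible graph containing an induced subgraph isomorphic to the graph K (identify its vertices with x, y, z, z', t, t', w accordingly), and suppose that every edge of G joining a vertex of this copy of K to a vertex outside it has its endpoint in K equal to x or to y. Then in every construction order of G, the vertex x occurs later than every other vertex of the copy of K, and every domination map for the order sends x to y. -/

import Mathlib

universe u

/-- `y` dominates `x` in `G`: `y ≠ x` and the closed neighbourhood of `x` is contained
in the closed neighbourhood of `y`. -/
def Dominates {V : Type u} (G : SimpleGraph V) (y x : V) : Prop :=
  y ≠ x ∧ ∀ z : V, (z = x ∨ G.Adj x z) → (z = y ∨ G.Adj y z)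

/-- `y` dominates `x` in the subgraph of `G` induced by `S`. -/
def DominatesOn {V : Type u} (G : SimpleGraph V) (S : Set V) (y x : V) : Prop :=
  y ≠ x ∧ ∀ z ∈ S, (z = x ∨ G.Adj x z) → (z = y ∨ G.Adj y z)

/-- `r` (a well-order on `V`) is a construction order for `G`: every non-root vertex `x`
(i.e. one with a strictly earlier vertex) is dominated, in the subgraph induced by the
vertices up to and including `x`, by some strictly earlier vertex. -/
def ConstructionOrderSpec {V : Type u} (G : SimpleGraph V) (r : V → V → Prop) : Prop :=
  ∀ x : V, (∃ y, r y x) → ∃ y, r y x ∧ DominatesOn G {z | r z x ∨ z = x} y x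

/-- A graph is constructible if it has a construction order. -/
def Constructible {V : Type u} (G : SimpleGraph V) : Prop :=
  ∃ r : V → V → Prop, IsWellOrder V r ∧ ConstructionOrderSpec G r

/-- `δ` is a domination map for the construction order `r` on `G`: it assigns to each non-root
vertex `x` a strictly earlier vertex dominating `x` in the subgraph induced by the vertices up
to and including `x`. -/
def IsDominationMap {V : Type u} (G : SimpleGraph V) (r : V → V → Prop) (δ : V → V) : Prop :=
  ∀ x : V, (∃ y, r y x) → r (δ x) x ∧ DominatesOn G {z | r z x ∨ z = x} (δ x) x

/-- The vertices of the graph `K`. -/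
inductive KVert : Type
  | x | y | z | z' | t | t' | w
deriving DecidableEq

open KVert in
/-- The edges of the graph `K`: xy, xt, xt', yz, yz', yt, yt', zz', zt, zw, z't', z'w, tw, t'w. -/
def KRel : KVert → KVert → Prop := fun a b =>
  (a, b) ∈ ([(x, y), (x, t), (x, t'), (y, z), (y, z'), (y, t), (y, t'), (z, z'), (z, t),
      (z, w), (z', t'), (z', w), (t, w), (t', w)] : List (KVert × KVert))

/-- The graph `K`. -/
def KGraph : SimpleGraph KVert := SimpleGraph.fromRel KRel

instance KVert.instFintypeAux : Fintype KVert :=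
  ⟨⟨[KVert.x, KVert.y, KVert.z, KVert.z', KVert.t, KVert.t', KVert.w], by decide⟩,
    by intro a; cases a <;> decide⟩

instance KRel.instDec : DecidableRel KRel := fun a b => by unfold KRel; infer_instance

instance KGraph.instDec : DecidableRel KGraph.Adj := fun a b => by
  unfold KGraph; rw [SimpleGraph.fromRel_adj]; infer_instance

theorem K_dom : ∀ l p : KVert, p ≠ l →
    (∀ c, (c = l ∨ KGraph.Adj l c) → (c = p ∨ KGraph.Adj p c)) →
    l = KVert.x ∧ p = KVert.y := by
  simp only [KGraph, SimpleGraph.fromRel_adj]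
  decide

theorem K_nbr : ∀ l : KVert, ∃ c, KGraph.Adj l c ∧ c ≠ KVert.x ∧ c ≠ KVert.y := by
  simp only [KGraph, SimpleGraph.fromRel_adj]
  decide

theorem K_key {V : Type u} (G : SimpleGraph V)
    (f : KVert → V) (hinj : Function.Injective f)
    (hind : ∀ a b : KVert, G.Adj (f a) (f b) ↔ KGraph.Adj a b)
    (hbd : ∀ (a : KVert) (v : V), v ∉ Set.range f → G.Adj (f a) v →
      a = KVert.x ∨ a = KVert.y)
    (S : Set V) (hS : ∀ a, f a ∈ S) (l : KVert) (p : V) (hp : DominatesOn G S p (f l)) :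
    l = KVert.x ∧ p = f KVert.y := by
  obtain ⟨hne, hd⟩ := hp
  by_cases hr : p ∈ Set.range f
  · obtain ⟨q, rfl⟩ := hr
    have := K_dom l q (fun h => hne (by rw [h])) (fun c hc => by
      have := hd (f c) (hS c) (by rw [hind, hinj.eq_iff]; exact hc)
      rwa [hind, hinj.eq_iff] at this)
    exact ⟨this.1, by rw [this.2]⟩
  · exfalso
    obtain ⟨c, hc, h1, h2⟩ := K_nbr l
    rcases hd (f c) (hS c) (Or.inr ((hind _ _).2 hc)) with h | h
    · exact hr ⟨c, h⟩
    · rcases hbd c p hr h.symm with h | h <;> contradiction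

theorem last_K_vertex_is_x_with_parent_y {V : Type u} (G : SimpleGraph V)
    (f : KVert → V) (hinj : Function.Injective f)
    (hind : ∀ a b : KVert, G.Adj (f a) (f b) ↔ KGraph.Adj a b)
    (hbd : ∀ (a : KVert) (v : V), v ∉ Set.range f → G.Adj (f a) v →
      a = KVert.x ∨ a = KVert.y)
    (hG : Constructible G) :
    ∀ r : V → V → Prop, IsWellOrder V r → ConstructionOrderSpec G r →
      (∀ a : KVert, a ≠ KVert.x → r (f a) (f KVert.x)) ∧
      (∀ δ : V → V, IsDominationMap G r δ → δ (f KVert.x) = f KVert.y) := by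
  intro r hr hspec
  have hwf : WellFounded (fun a b : KVert => r (f b) (f a)) := by
    haveI : IsTrans KVert (fun a b : KVert => r (f b) (f a)) :=
      ⟨fun a b c h1 h2 => _root_.trans_of r h2 h1⟩
    haveI : Std.Irrefl (fun a b : KVert => r (f b) (f a)) :=
      ⟨fun a h => irrefl_of r _ h⟩
    exact Finite.wellFounded_of_trans_of_irrefl _
  obtain ⟨l, -, hl⟩ := hwf.has_min Set.univ ⟨KVert.x, trivial⟩
  have hmax : ∀ a, a ≠ l → r (f a) (f l) := fun a ha => by
    rcases trichotomous_of r (f a) (f l) with h | h | h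
    · exact h
    · exact absurd (hinj h) ha
    · exact absurd h (hl a trivial)
  have hS : ∀ a, f a ∈ {z | r z (f l) ∨ z = f l} := fun a => by
    by_cases ha : a = l
    · exact Or.inr (by rw [ha])
    · exact Or.inl (hmax a ha)
  have hex : ∃ v, r v (f l) := by
    obtain ⟨c, hc, -, -⟩ := K_nbr l
    exact ⟨f c, hmax c hc.ne'⟩
  obtain ⟨p, -, hp⟩ := hspec (f l) hex
  obtain ⟨hlx, -⟩ := K_key G f hinj hind hbd _ hS l p hp
  subst hlx
  exact ⟨hmax, fun δ hδ => (K_key G f hinj hind hbd _ hS _ _ (hδ _ hex).2).2⟩
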